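/- arXiv:math/0603346 — 3 statements merged into one kernel-verified Lean document; each statement's English description precedes it below -/
import Mathlib

section
/- Let φ(x) = exp(-x²), let λ > 0 be fixed, and let (c_k)_{k∈ℤ} be complex coefficients with Σ_{k∈ℤ} |c_k|² < ∞. Define f(x) = Σ_{k=-∞}^{∞} c_k φ(x - λk). Then ‖f‖_{L²(ℝ)}² ≥ μ(λ) · Σ_{k∈ℤ} |c_k|², where μ(λ) := (2π/λ) · inf_{ω∈ℝ} Σ_{l∈ℤ} |φ̂((ω + 2πl)/λ)|². -/
open MeasureTheory Real

/-- The Gaussian `φ(x) = exp(-x²)`. -/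
noncomputable def gauss (x : ℝ) : ℝ := Real.exp (-x ^ 2)

/-- The Fourier transform of the Gaussian: `φ̂(ω) = (1/√2) exp(-ω²/4)`. -/
noncomputable def gaussFT (w : ℝ) : ℝ := (1 / Real.sqrt 2) * Real.exp (-w ^ 2 / 4)

/-!
After the substitution `x = lam * y` the series consists of the integer translates of the single
function `y ↦ gauss (lam * y)`. For a finite sum of integer translates of `φ`, Plancherel gives
`∫ |𝓕 φ|² |P|²` with `P` a trigonometric polynomial of period one; folding the integral onto the
circle replaces `|𝓕 φ|²` by its periodization, whose infimum is the constant, and Parseval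
evaluates `∫ |P|²`. The finite inequalities pass to square-summable coefficients by dominated
convergence: `|∑ cₖ φ(x - k)|²` is dominated by `∑ⱼₖ |cⱼ cₖ| |φ(x - j) φ(x - k)|`, which is
integrable because the overlaps `∫ |φ(x) φ(x + n)|` are summable in `n`.
-/

open Filter Topology FourierTransform

lemma summable_of_summable_mul_prod {ι 𝕜 : Type*} [NormedField 𝕜] [CompleteSpace 𝕜] {f : ι → 𝕜}
    (h : Summable fun p : ι × ι => f p.1 * f p.2) : Summable f := by
  by_cases hf : ∃ i, f i ≠ 0
  · obtain ⟨i, hi⟩ := hf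
    have hrow : Summable fun j => f i * f j :=
      h.comp_injective (i := fun j => (i, j)) (Prod.mk_right_injective i)
    exact (summable_mul_left_iff hi).mp hrow
  · push Not at hf
    exact summable_zero.congr fun i => (hf i).symm

section SeriesOfFunctions

variable {α ι E : Type*} [MeasurableSpace α] {μ : Measure α} [NormedAddCommGroup E]

lemma tsum_lintegral_enorm_ne_top_of_summable_integral_norm {F : ι → α → E}
    (hF : ∀ i, Integrable (F i) μ) (hsum : Summable fun i => ∫ a, ‖F i a‖ ∂μ) :
    ∑' i, ∫⁻ a, ‖F i a‖ₑ ∂μ ≠ ⊤ := by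
  simp_rw [← ofReal_integral_norm_eq_lintegral_enorm (hF _)]
  rw [← ENNReal.ofReal_tsum_of_nonneg (fun i => integral_nonneg fun a => norm_nonneg _) hsum]
  exact ENNReal.ofReal_ne_top

variable [Countable ι]

lemma ae_summable_norm_of_summable_integral_norm {F : ι → α → E}
    (hF : ∀ i, Integrable (F i) μ) (hsum : Summable fun i => ∫ a, ‖F i a‖ ∂μ) :
    ∀ᵐ a ∂μ, Summable fun i => ‖F i a‖ := by
  have hfin := tsum_lintegral_enorm_ne_top_of_summable_integral_norm hF hsum
  rw [← lintegral_tsum fun i => (hF i).aestronglyMeasurable.enorm] at hfin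
  filter_upwards [ae_lt_top' (AEMeasurable.tsum fun i => (hF i).aestronglyMeasurable.enorm) hfin]
    with a ha
  exact ENNReal.tsum_coe_ne_top_iff_summable_coe.mp ha.ne

lemma integrable_tsum_of_summable_integral_norm [CompleteSpace E] {F : ι → α → E}
    (hF : ∀ i, Integrable (F i) μ) (hsum : Summable fun i => ∫ a, ‖F i a‖ ∂μ) :
    Integrable (fun a => ∑' i, F i a) μ := by
  have hpartial (s : Finset ι) : AEStronglyMeasurable (fun a => ∑ i ∈ s, F i a) μ :=
    (integrable_finsetSum s fun i _ => hF i).aestronglyMeasurable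
  refine ⟨aestronglyMeasurable_of_tendsto_ae atTop hpartial
    ((ae_summable_norm_of_summable_integral_norm hF hsum).mono fun a ha => ha.of_norm.hasSum), ?_⟩
  calc ∫⁻ a, ‖∑' i, F i a‖ₑ ∂μ ≤ ∫⁻ a, ∑' i, ‖F i a‖ₑ ∂μ :=
        lintegral_mono fun a => enorm_tsum_le_tsum_enorm
    _ = ∑' i, ∫⁻ a, ‖F i a‖ₑ ∂μ := lintegral_tsum fun i => (hF i).aestronglyMeasurable.enorm
    _ < ⊤ := (tsum_lintegral_enorm_ne_top_of_summable_integral_norm hF hsum).lt_top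

theorem tendsto_integral_norm_sq_sum [CompleteSpace E] {g : ι → α → E}
    (hg : ∀ i, AEStronglyMeasurable (g i) μ)
    (hint : ∀ i j, Integrable (fun a => ‖g i a‖ * ‖g j a‖) μ)
    (hsum : Summable fun p : ι × ι => ∫ a, ‖g p.1 a‖ * ‖g p.2 a‖ ∂μ) :
    Tendsto (fun s : Finset ι => ∫ a, ‖∑ i ∈ s, g i a‖ ^ 2 ∂μ) atTop
      (𝓝 (∫ a, ‖∑' i, g i a‖ ^ 2 ∂μ)) := by
  have hnorm : ∀ (p : ι × ι) a, ‖‖g p.1 a‖ * ‖g p.2 a‖‖ = ‖g p.1 a‖ * ‖g p.2 a‖ :=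
    fun p a => norm_of_nonneg (by positivity)
  have hsum' : Summable fun p : ι × ι => ∫ a, ‖‖g p.1 a‖ * ‖g p.2 a‖‖ ∂μ := by
    simpa only [hnorm] using hsum
  have hae : ∀ᵐ a ∂μ, Summable fun p : ι × ι => ‖g p.1 a‖ * ‖g p.2 a‖ := by
    simpa only [hnorm] using ae_summable_norm_of_summable_integral_norm
      (fun p : ι × ι => hint p.1 p.2) hsum'
  refine tendsto_integral_filter_of_dominated_convergence
    (fun a => ∑' p : ι × ι, ‖g p.1 a‖ * ‖g p.2 a‖) (Eventually.of_forall fun s => by fun_prop)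
    (Eventually.of_forall fun s => ?_)
    (integrable_tsum_of_summable_integral_norm (fun p : ι × ι => hint p.1 p.2) hsum') ?_
  · filter_upwards [hae] with a ha
    calc ‖‖∑ i ∈ s, g i a‖ ^ 2‖ ≤ (∑ i ∈ s, ‖g i a‖) ^ 2 := by
          rw [norm_pow, norm_norm]
          gcongr
          exact norm_sum_le _ _
      _ = ∑ p ∈ s ×ˢ s, ‖g p.1 a‖ * ‖g p.2 a‖ := by rw [sq, Finset.sum_mul_sum, Finset.sum_product]
      _ ≤ ∑' p : ι × ι, ‖g p.1 a‖ * ‖g p.2 a‖ := ha.sum_le_tsum _ fun p _ => by positivity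
  · filter_upwards [hae] with a ha
    have hnormsum : Summable fun i => ‖g i a‖ :=
      summable_of_summable_mul_prod (f := fun i => ‖g i a‖) ha
    exact hnormsum.of_norm.hasSum.norm.pow 2

end SeriesOfFunctions

lemma summable_mul_mul_sub {G : Type*} [AddGroup G] {a w : G → ℝ}
    (ha : Summable fun k => a k ^ 2) (hw : Summable w) :
    Summable fun p : G × G => a p.1 * a p.2 * w (p.1 - p.2) := by
  have hprod : Summable fun p : G × G => a p.1 ^ 2 * |w p.2| :=
    ha.mul_of_nonneg hw.abs (fun k => sq_nonneg _) fun k => abs_nonneg _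
  have hfst : Summable fun p : G × G => a p.1 ^ 2 * |w (p.1 - p.2)| :=
    hprod.comp_injective (i := fun p : G × G => (p.1, p.1 - p.2))
      fun p q h => by
        obtain ⟨hfst, hsub⟩ := Prod.mk.inj h
        rw [hfst] at hsub
        exact Prod.ext hfst (sub_right_injective hsub)
  have hsnd : Summable fun p : G × G => a p.2 ^ 2 * |w (p.1 - p.2)| :=
    hprod.comp_injective (i := fun p : G × G => (p.2, p.1 - p.2))
      fun p q h => by
        obtain ⟨hsnd, hsub⟩ := Prod.mk.inj h
        rw [hsnd] at hsub
        exact Prod.ext (sub_left_injective hsub) hsnd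
  refine (hfst.add hsnd).of_norm_bounded fun p => ?_
  rw [norm_mul, norm_eq_abs, norm_eq_abs, ← add_mul]
  gcongr
  rw [abs_le]
  constructor <;> nlinarith [sq_nonneg (a p.1 + a p.2), sq_nonneg (a p.1 - a p.2)]

section Periodization

theorem mul_integral_le_integral_mul_of_le_tsum {W : ℝ → ℝ} {g : UnitAddCircle → ℝ} {m : ℝ}
    (hg : Integrable g) (hg_nonneg : 0 ≤ g) (hWg : Integrable fun t : ℝ => W t * g t)
    (hm : ∀ t, m ≤ ∑' n : ℤ, W (t + n)) :
    m * ∫ x, g x ≤ ∫ t : ℝ, W t * g t := by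
  have hper : ∀ (t : ℝ) (n : ℤ), g ((t + n : ℝ) : UnitAddCircle) = g t := fun t n => by simp
  have hint : ∀ n : ℤ, Integrable (fun t : ℝ => W (t + n) * g t)
      (volume.restrict (Set.Ioc 0 1)) := fun n => by
    simpa only [hper] using (hWg.comp_add_right (n : ℝ)).restrict
  have hsum : Summable fun n : ℤ => ∫ t in Set.Ioc (0 : ℝ) 1, ‖W (t + n) * g t‖ := by
    simpa only [hper, intervalIntegral.integral_of_le zero_le_one]
      using hWg.norm.hasSum_intervalIntegral_comp_add_int.summable
  have hunfold : HasSum (fun n : ℤ => ∫ t in Set.Ioc (0 : ℝ) 1, W (t + n) * g t)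
      (∫ t : ℝ, W t * g t) := by
    simpa only [hper, intervalIntegral.integral_of_le zero_le_one]
      using hWg.hasSum_intervalIntegral_comp_add_int
  have hg' : Integrable (fun t : ℝ => g t) (volume.restrict (Set.Ioc 0 1)) := by
    simpa [Function.comp_def]
      using (UnitAddCircle.measurePreserving_mk 0).integrable_comp_of_integrable hg
  calc m * ∫ x, g x = ∫ t in Set.Ioc (0 : ℝ) 1, m * g t := by
        rw [integral_const_mul, ← UnitAddCircle.integral_preimage 0, zero_add]
    _ ≤ ∫ t in Set.Ioc (0 : ℝ) 1, ∑' n : ℤ, W (t + n) * g t := by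
        refine integral_mono (hg'.const_mul m)
          (integrable_tsum_of_summable_integral_norm hint hsum) fun t => ?_
        dsimp only
        rw [tsum_mul_right]
        exact mul_le_mul_of_nonneg_right (hm t) (hg_nonneg _)
    _ = ∫ t : ℝ, W t * g t :=
        (hasSum_integral_of_summable_integral_norm hint hsum).unique hunfold

theorem integral_norm_sq_sum_fourier {T : ℝ} [Fact (0 < T)] (s : Finset ℤ) (c : ℤ → ℂ) :
    ∫ x, ‖∑ k ∈ s, c k * fourier k x‖ ^ 2 ∂AddCircle.haarAddCircle (T := T) =
      ∑ k ∈ s, ‖c k‖ ^ 2 := by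
  have h := (orthonormal_fourier (T := T)).inner_sum c c s
  simp only [fourierLp, ← map_smul, ← map_sum] at h
  rw [ContinuousMap.inner_toLp] at h
  simp only [Complex.mul_conj', Complex.conj_mul', ContinuousMap.sum_apply,
    ContinuousMap.smul_apply, smul_eq_mul] at h
  apply Complex.ofRealLI.injective
  rw [← LinearIsometry.integral_comp_comm]
  simpa using h

end Periodization

section FourierTransform

variable {V E : Type*} [NormedAddCommGroup V] [InnerProductSpace ℝ V] [MeasurableSpace V]
  [BorelSpace V] [FiniteDimensional ℝ V]

theorem integral_norm_sq_fourier_eq [NormedAddCommGroup E] [InnerProductSpace ℂ E] [CompleteSpace E]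
    {f : V → E} (hf_cont : Continuous f) (hf : Integrable f)
    (hFf : Integrable (𝓕 f)) : ∫ ξ, ‖𝓕 f ξ‖ ^ 2 = ∫ x, ‖f x‖ ^ 2 := by
  have h := VectorFourier.integral_sesq_fourierIntegral_eq_neg_flip (innerSL ℂ)
    (L := innerₗ V) continuous_fourierChar continuous_inner hf hFf
  have hinv : VectorFourier.fourierIntegral 𝐞 volume (-(innerₗ V).flip) (𝓕 f) = f := by
    rw [flip_innerₗ]
    exact hf_cont.fourierInv_fourier_eq hf hFf
  have hfwd : VectorFourier.fourierIntegral 𝐞 volume (innerₗ V) f = 𝓕 f := rfl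
  rw [hinv, hfwd] at h
  simp only [innerSL_apply_apply] at h
  apply Complex.ofRealLI.injective
  simpa [← LinearIsometry.integral_comp_comm, inner_self_eq_norm_sq_to_K] using h

theorem norm_le_integral_norm_fourier [NormedAddCommGroup E] [NormedSpace ℂ E] [CompleteSpace E]
    {f : V → E} (hf_cont : Continuous f) (hf : Integrable f)
    (hFf : Integrable (𝓕 f)) (x : V) : ‖f x‖ ≤ ∫ ξ, ‖𝓕 f ξ‖ := by
  rw [← congrFun (hf_cont.fourierInv_fourier_eq hf hFf) x]
  exact VectorFourier.norm_fourierIntegral_le_integral_norm ..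

lemma integrable_norm_sq_fourier [NormedAddCommGroup E] [NormedSpace ℂ E] {f : V → E}
    (hFf : Integrable (𝓕 f)) : Integrable fun ξ => ‖𝓕 f ξ‖ ^ 2 := by
  have hbound (ξ : V) : ‖𝓕 f ξ‖ ≤ ∫ x, ‖f x‖ :=
    VectorFourier.norm_fourierIntegral_le_integral_norm 𝐞 volume (innerₗ V) f ξ
  simpa only [sq] using hFf.norm.mul_bdd hFf.norm.aestronglyMeasurable
    (ae_of_all _ fun ξ => (norm_norm _).trans_le (hbound ξ))

end FourierTransform

section IntegerTranslates

variable {φ : ℝ → ℂ}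

lemma fourier_sum_mul_translate (hφ : Integrable φ) (s : Finset ℤ) (c : ℤ → ℂ) (ξ : ℝ) :
    𝓕 (fun x => ∑ k ∈ s, c k * φ (x - k)) ξ =
      (∑ k ∈ s, c k * fourier k (-(ξ : UnitAddCircle))) * 𝓕 φ ξ := by
  have htranslate (k : ℤ) :
      𝓕 (fun x => φ (x - k)) ξ = fourier k (-(ξ : UnitAddCircle)) * 𝓕 φ ξ := by
    have h := congrFun
      (VectorFourier.fourierIntegral_comp_add_right 𝐞 volume (innerₗ ℝ) φ (-k : ℝ)) ξ
    refine h.trans ?_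
    rw [innerₗ_apply_apply, RCLike.inner_apply, conj_trivial, Circle.smul_def, fourierChar_apply,
      ← AddCircle.coe_neg, fourier_coe_apply, smul_eq_mul]
    congr 2
    push_cast
    ring
  have hint (k : ℤ) : Integrable fun x => 𝐞 (-(x * ξ)) • (c k * φ (x - k)) := by
    simpa only [RCLike.inner_apply, conj_trivial, mul_comm ξ] using
      (Real.fourierIntegral_convergent_iff ξ).2 ((hφ.comp_sub_right (k : ℝ)).const_mul (c k))
  simp only [fourier_real_eq, Finset.smul_sum] at htranslate ⊢
  rw [integral_finsetSum _ fun k _ => hint k, Finset.sum_mul]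
  refine Finset.sum_congr rfl fun k _ => ?_
  simp only [Circle.smul_def, smul_eq_mul, mul_left_comm _ (c k), integral_const_mul]
    at htranslate ⊢
  rw [htranslate, mul_assoc]

theorem mul_sum_norm_sq_le_integral_norm_sq_sum_translates (hφ_cont : Continuous φ)
    (hφ : Integrable φ) (hFφ : Integrable (𝓕 φ)) {m : ℝ}
    (hm : ∀ ξ, m ≤ ∑' n : ℤ, ‖𝓕 φ (ξ + n)‖ ^ 2) (s : Finset ℤ) (c : ℤ → ℂ) :
    m * ∑ k ∈ s, ‖c k‖ ^ 2 ≤ ∫ x : ℝ, ‖∑ k ∈ s, c k * φ (x - k)‖ ^ 2 := by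
  set P : C(UnitAddCircle, ℂ) := ∑ k ∈ s, c k • fourier k with hP
  have hP_apply (x : UnitAddCircle) : P x = ∑ k ∈ s, c k * fourier k x := by
    simp [hP]
  have hP_integral : ∫ x, ‖P (-x)‖ ^ 2 = ∑ k ∈ s, ‖c k‖ ^ 2 := by
    rw [integral_neg_eq_self fun x => ‖P x‖ ^ 2, ← integral_norm_sq_sum_fourier (T := 1),
      AddCircle.integral_haarAddCircle, inv_one, one_smul]
    simp only [hP_apply]
  have hfourier : 𝓕 (fun x => ∑ k ∈ s, c k * φ (x - k)) = fun ξ : ℝ => P (-ξ) * 𝓕 φ ξ := by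
    ext ξ
    rw [fourier_sum_mul_translate hφ, hP_apply]
  have hP_cont : Continuous fun ξ : ℝ => P (-ξ) :=
    P.continuous.comp (AddCircle.continuous_mk' 1).neg
  have hPFφ : Integrable fun ξ : ℝ => P (-ξ) * 𝓕 φ ξ :=
    hFφ.bdd_mul hP_cont.aestronglyMeasurable (ae_of_all _ fun ξ => P.norm_coe_le_norm _)
  have hplancherel := integral_norm_sq_fourier_eq (f := fun x => ∑ k ∈ s, c k * φ (x - k))
    (by fun_prop) (integrable_finsetSum _ fun k _ => (hφ.comp_sub_right _).const_mul _)
    (hfourier ▸ hPFφ)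
  simp only [hfourier, norm_mul, mul_pow, mul_comm (‖P _‖ ^ 2)] at hplancherel
  rw [← hP_integral, ← hplancherel]
  refine mul_integral_le_integral_mul_of_le_tsum ?_ (fun x => by positivity) ?_ hm
  · exact Continuous.integrable_of_hasCompactSupport (by fun_prop) (.of_compactSpace _)
  · refine (integrable_norm_sq_fourier hFφ).mul_bdd (c := ‖P‖ ^ 2)
      (hP_cont.norm.pow 2).aestronglyMeasurable (ae_of_all _ fun ξ => ?_)
    rw [norm_pow, norm_norm]
    gcongr
    exact P.norm_coe_le_norm _

theorem mul_tsum_norm_sq_le_integral_norm_sq_tsum_translates (hφ_cont : Continuous φ)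
    (hφ : Integrable φ) (hFφ : Integrable (𝓕 φ))
    (hoverlap : Summable fun n : ℤ => ∫ x, ‖φ x‖ * ‖φ (x + n)‖) {m : ℝ}
    (hm : ∀ ξ, m ≤ ∑' n : ℤ, ‖𝓕 φ (ξ + n)‖ ^ 2) {c : ℤ → ℂ}
    (hc : Summable fun k => ‖c k‖ ^ 2) :
    m * ∑' k, ‖c k‖ ^ 2 ≤ ∫ x : ℝ, ‖∑' k : ℤ, c k * φ (x - k)‖ ^ 2 := by
  have hgram (j k : ℤ) : ∫ x : ℝ, ‖c j * φ (x - j)‖ * ‖c k * φ (x - k)‖ =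
      ‖c j‖ * ‖c k‖ * ∫ x, ‖φ x‖ * ‖φ (x + (j - k : ℤ))‖ := by
    rw [← integral_sub_right_eq_self (fun x => ‖φ x‖ * _) (j : ℝ), ← integral_const_mul]
    congr with x
    rw [norm_mul, norm_mul, show x - j + ((j - k : ℤ) : ℝ) = x - k by push_cast; ring]
    ring
  have hprod (j k : ℤ) : Integrable fun x : ℝ => ‖c j * φ (x - j)‖ * ‖c k * φ (x - k)‖ := by
    refine ((hφ.comp_sub_right _).const_mul _).norm.mul_bdd (c := ‖c k‖ * ∫ ξ, ‖𝓕 φ ξ‖)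
      (by fun_prop) (ae_of_all _ fun x => ?_)
    rw [norm_norm, norm_mul]
    gcongr
    exact norm_le_integral_norm_fourier hφ_cont hφ hFφ _
  refine le_of_tendsto_of_tendsto' (hc.hasSum.mul_left m)
    (tendsto_integral_norm_sq_sum (fun k => by fun_prop) hprod ?_) fun s => ?_
  · simpa only [hgram] using summable_mul_mul_sub hc hoverlap
  · rw [← Finset.mul_sum]
    exact mul_sum_norm_sq_le_integral_norm_sq_sum_translates hφ_cont hφ hFφ hm s c

end IntegerTranslates

section Gaussian

lemma summable_int_exp_neg_mul_sq {b : ℝ} (hb : 0 < b) :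
    Summable fun n : ℤ => rexp (-b * (n : ℝ) ^ 2) := by
  have h := summable_pow_mul_jacobiTheta₂_term_bound 0 (T := b / π) (by positivity) 0
  refine h.congr fun n => ?_
  rw [pow_zero, one_mul]
  congr 1
  field_simp
  push_cast
  ring

lemma integral_gauss_mul_gauss_add (a : ℝ) :
    ∫ x, gauss x * gauss (x + a) = √(π / 2) * rexp (-a ^ 2 / 2) := by
  have hsquare (x : ℝ) :
      gauss x * gauss (x + a) = rexp (-2 * (x + a / 2) ^ 2) * rexp (-a ^ 2 / 2) := by
    rw [gauss, gauss, ← exp_add, ← exp_add]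
    ring_nf
  simp only [hsquare, integral_mul_const]
  rw [integral_add_right_eq_self fun x => rexp (-2 * x ^ 2), integral_gaussian]

variable {lam : ℝ}

lemma summable_integral_norm_gauss_mul_norm_gauss_add (hlam : 0 < lam) :
    Summable fun n : ℤ =>
      ∫ y : ℝ, ‖(gauss (lam * y) : ℂ)‖ * ‖(gauss (lam * (y + n)) : ℂ)‖ := by
  have hoverlap (n : ℤ) :
      ∫ y : ℝ, ‖(gauss (lam * y) : ℂ)‖ * ‖(gauss (lam * (y + n)) : ℂ)‖ =
        |lam⁻¹| * √(π / 2) * rexp (-(lam ^ 2 / 2) * (n : ℝ) ^ 2) := by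
    simp only [Complex.norm_real, mul_add, gauss, norm_of_nonneg (exp_nonneg _)]
    have h := Measure.integral_comp_mul_left (fun x => gauss x * gauss (x + lam * n)) lam
    rw [integral_gauss_mul_gauss_add, smul_eq_mul, ← mul_assoc] at h
    refine h.trans ?_
    ring_nf
  simp only [hoverlap]
  exact (summable_int_exp_neg_mul_sq (by positivity)).mul_left _

lemma integrable_gauss_mul (hlam : 0 < lam) : Integrable fun y : ℝ => (gauss (lam * y) : ℂ) := by
  simp only [gauss, mul_pow, ← neg_mul]
  exact (integrable_exp_neg_mul_sq (by positivity)).ofReal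

lemma fourier_gauss_mul (hlam : 0 < lam) (ξ : ℝ) :
    𝓕 (fun y : ℝ => (gauss (lam * y) : ℂ)) ξ =
      ((√(2 * π) / lam * gaussFT (2 * π * ξ / lam) : ℝ) : ℂ) := by
  have hb : 0 < ((lam ^ 2 / π : ℝ) : ℂ).re := by rw [Complex.ofReal_re]; positivity
  have hgauss : (fun y : ℝ => (gauss (lam * y) : ℂ)) =
      fun y : ℝ => Complex.exp (-π * ((lam ^ 2 / π : ℝ) : ℂ) * y ^ 2) := by
    ext y
    rw [gauss, Complex.ofReal_exp]
    congr 1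
    norm_cast
    field_simp
  have hconst : 1 / √(lam ^ 2 / π) = √(2 * π) / lam * (1 / √2) := by
    rw [sqrt_div (sq_nonneg lam), sqrt_sq hlam.le, sqrt_mul zero_le_two]
    field_simp
  have hexponent : -π / (lam ^ 2 / π) * ξ ^ 2 = -(2 * π * ξ / lam) ^ 2 / 4 := by
    field_simp
    ring
  have hsqrt : ((lam ^ 2 / π : ℝ) : ℂ) ^ (1 / 2 : ℂ) = (√(lam ^ 2 / π) : ℝ) := by
    rw [sqrt_eq_rpow, Complex.ofReal_cpow (by positivity)]
    norm_num
  rw [hgauss, congrFun (fourier_gaussian_pi hb) ξ, hsqrt]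
  norm_cast
  rw [hconst, hexponent, gaussFT, mul_assoc]

lemma norm_sq_fourier_gauss_mul (hlam : 0 < lam) (ξ : ℝ) :
    ‖𝓕 (fun y : ℝ => (gauss (lam * y) : ℂ)) ξ‖ ^ 2 =
      2 * π / lam ^ 2 * gaussFT (2 * π * ξ / lam) ^ 2 := by
  rw [fourier_gauss_mul hlam, Complex.norm_real, norm_eq_abs, sq_abs, mul_pow, div_pow,
    sq_sqrt (by positivity)]

lemma integrable_fourier_gauss_mul (hlam : 0 < lam) :
    Integrable (𝓕 fun y : ℝ => (gauss (lam * y) : ℂ)) := by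
  have hfourier (ξ : ℝ) : 𝓕 (fun y : ℝ => (gauss (lam * y) : ℂ)) ξ =
      ((√(2 * π) / lam * (1 / √2) * rexp (-(π ^ 2 / lam ^ 2) * ξ ^ 2) : ℝ) : ℂ) := by
    rw [fourier_gauss_mul hlam, gaussFT, mul_assoc]
    ring_nf
  simp only [funext hfourier]
  exact ((integrable_exp_neg_mul_sq (by positivity)).const_mul _).ofReal

end Gaussian

theorem l2_lower_bound_for_gaussian_translates
    (lam : ℝ) (hlam : 0 < lam) (c : ℤ → ℂ)
    (hc : Summable fun k : ℤ => ‖c k‖ ^ 2) :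
    ∫ x : ℝ, ‖∑' k : ℤ, c k * (gauss (x - lam * k) : ℂ)‖ ^ 2 ≥
      (2 * Real.pi / lam * ⨅ w : ℝ, ∑' l : ℤ, (gaussFT ((w + 2 * Real.pi * l) / lam)) ^ 2) *
        ∑' k : ℤ, ‖c k‖ ^ 2 := by
  have hm (ξ : ℝ) : 2 * π / lam ^ 2 * ⨅ w : ℝ, ∑' l : ℤ, gaussFT ((w + 2 * π * l) / lam) ^ 2 ≤
      ∑' n : ℤ, ‖𝓕 (fun y : ℝ => (gauss (lam * y) : ℂ)) (ξ + n)‖ ^ 2 := by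
    have hinf : ⨅ w : ℝ, ∑' l : ℤ, gaussFT ((w + 2 * π * l) / lam) ^ 2 ≤ _ := ciInf_le
      ⟨0, Set.forall_mem_range.mpr fun w => tsum_nonneg fun l => by positivity⟩ (2 * π * ξ)
    calc _ ≤ 2 * π / lam ^ 2 * ∑' l : ℤ, gaussFT ((2 * π * ξ + 2 * π * l) / lam) ^ 2 := by gcongr
      _ = _ := by simp only [norm_sq_fourier_gauss_mul hlam, tsum_mul_left, mul_add]
  have hriesz := mul_tsum_norm_sq_le_integral_norm_sq_tsum_translates (by unfold gauss; fun_prop)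
    (integrable_gauss_mul hlam) (integrable_fourier_gauss_mul hlam)
    (summable_integral_norm_gauss_mul_norm_gauss_add hlam) hm hc
  have hdilate := Measure.integral_comp_mul_left
    (fun x : ℝ => ‖∑' k : ℤ, c k * (gauss (x - lam * k) : ℂ)‖ ^ 2) lam
  simp only [← mul_sub] at hdilate
  rw [hdilate, smul_eq_mul, abs_of_pos (inv_pos.mpr hlam), ← div_eq_inv_mul,
    le_div_iff₀ hlam] at hriesz
  refine hriesz.trans_eq' ?_
  field_simp
end

section
/- Let φ(x) = exp(-x²), so that its Fourier transform is φ̂(ω) = (1/√2) exp(-ω²/4), and for λ > 0 define μ(λ) := (2π/λ) · inf_{ω∈ℝ} Σ_{l∈ℤ} |φ̂((ω + 2πl)/λ)|². Then for every λ > 0, μ(λ) ≥ (π/λ) · exp(-π²/(2λ²)). -/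
open Real

/-- `μ(λ) = (2π/λ) · inf_ω Σ_l |φ̂((ω + 2πl)/λ)|²`. -/
noncomputable def mu (lam : ℝ) : ℝ :=
  2 * Real.pi / lam * ⨅ w : ℝ, ∑' l : ℤ, (gaussFT ((w + 2 * Real.pi * l) / lam)) ^ 2

/-!
The half-width of a period `2π` is `π`, so every `ω` has a translate `ω + 2πl` in `[-π, π]`. By
monotonicity of the Gaussian in `|ω|`, that single term of the nonnegative series is already at
least `φ̂(π/λ)² = (1/2) exp(-π²/(2λ²))`.
-/

lemma exists_int_abs_add_mul_le_half {K : Type*} [Field K] [LinearOrder K] [IsStrictOrderedRing K]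
    [FloorRing K] {p : K} (hp : p ≠ 0) (x : K) : ∃ n : ℤ, |x + p * n| ≤ |p| / 2 := by
  refine ⟨-round (x / p), ?_⟩
  calc |x + p * ((-round (x / p) : ℤ) : K)|
      = |p| * |x / p - round (x / p)| := by
        rw [← abs_mul, mul_sub, mul_div_cancel₀ x hp, Int.cast_neg, mul_neg, sub_eq_add_neg]
    _ ≤ |p| * (1 / 2) := by gcongr; exact abs_sub_round _
    _ = |p| / 2 := mul_one_div _ _

lemma le_iInf_tsum_add_mul_int {f : ℝ → ℝ} {p c : ℝ} (hp : p ≠ 0) (hf : ∀ x, 0 ≤ f x)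
    (hsum : ∀ x, Summable fun l : ℤ => f (x + p * l)) (hc : ∀ x, |x| ≤ |p| / 2 → c ≤ f x) :
    c ≤ ⨅ x : ℝ, ∑' l : ℤ, f (x + p * l) := by
  refine le_ciInf fun x => ?_
  obtain ⟨n, hn⟩ := exists_int_abs_add_mul_le_half hp x
  exact (hc _ hn).trans ((hsum x).le_tsum n fun _ _ => hf _)

lemma summable_exp_neg_mul_sq_add_mul_int {a p : ℝ} (ha : 0 < a) (hp : p ≠ 0) (x : ℝ) :
    Summable fun l : ℤ => exp (-a * (x + p * l) ^ 2) := by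
  have ht : 0 < a * p ^ 2 / π := by positivity
  refine (HurwitzZeta.hasSum_int_evenKernel (x / p) ht).summable.congr fun l => ?_
  congr 1
  field_simp
  ring

lemma gaussFT_sq (x : ℝ) : gaussFT x ^ 2 = 1 / 2 * exp (-x ^ 2 / 2) := by
  rw [gaussFT, mul_pow, div_pow, one_pow, sq_sqrt zero_le_two, ← exp_nat_mul]
  ring_nf

lemma gaussFT_sq_le_of_abs_le {x y : ℝ} (h : |x| ≤ |y|) : gaussFT y ^ 2 ≤ gaussFT x ^ 2 := by
  have hsq : x ^ 2 ≤ y ^ 2 := sq_le_sq.mpr h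
  rw [gaussFT_sq, gaussFT_sq]
  gcongr

lemma summable_gaussFT_sq {lam p : ℝ} (hlam : lam ≠ 0) (hp : p ≠ 0) (w : ℝ) :
    Summable fun l : ℤ => gaussFT ((w + p * l) / lam) ^ 2 := by
  have ha : 0 < 1 / (2 * lam ^ 2) := by positivity
  refine ((summable_exp_neg_mul_sq_add_mul_int ha hp w).mul_left (1 / 2)).congr fun l => ?_
  rw [gaussFT_sq]
  ring_nf

lemma gaussFT_sq_le_iInf_tsum {lam p : ℝ} (hlam : lam ≠ 0) (hp : p ≠ 0) :
    gaussFT (p / 2 / lam) ^ 2 ≤ ⨅ w : ℝ, ∑' l : ℤ, gaussFT ((w + p * l) / lam) ^ 2 := by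
  refine le_iInf_tsum_add_mul_int (f := fun w => gaussFT (w / lam) ^ 2) hp
    (fun _ => sq_nonneg _) (summable_gaussFT_sq hlam hp) fun w hw => gaussFT_sq_le_of_abs_le ?_
  rw [abs_div, abs_div, abs_div, abs_two]
  gcongr

theorem mu_lower_bound (lam : ℝ) (hlam : 0 < lam) :
    mu lam ≥ Real.pi / lam * Real.exp (-Real.pi ^ 2 / (2 * lam ^ 2)) := by
  calc Real.pi / lam * Real.exp (-Real.pi ^ 2 / (2 * lam ^ 2))
      = 2 * π / lam * gaussFT (2 * π / 2 / lam) ^ 2 := by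
        rw [gaussFT_sq, mul_div_cancel_left₀ π two_ne_zero]
        ring_nf
    _ ≤ mu lam := by
        rw [mu]
        gcongr
        exact gaussFT_sq_le_iInf_tsum hlam.ne' two_pi_pos.ne'
end

section
/- Let φ(x) = exp(-x²). Then for every λ ∈ (0, 1), ‖P_∞(λ, ·)‖_∞ ≥ (3π/(64λ)) · exp(-π²/(2λ²)). -/
open Real

/-- The Fourier cosine coefficients of the auxiliary function `H`. -/
noncomputable def a : ℕ → ℝ
  | 0 => 3 / 4
  | 1 => 4 / (3 * Real.pi)
  | 2 => -(1 / 4)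
  | k => -4 * Real.sin (k * Real.pi / 2) / (Real.pi * k * (k ^ 2 - 4))

/-- `A_∞(λ) = -Σ_{k=1}^∞ a_k φ(λk)`. -/
noncomputable def Ainf (φ : ℝ → ℝ) (lam : ℝ) : ℝ :=
  -∑' k : ℕ, a (k + 1) * φ (lam * (k + 1))

/-- `P_∞(λ, x) = 2 A_∞(λ) φ(x) + Σ_{k=1}^∞ a_k (φ(x + λk) + φ(x - λk))`. -/
noncomputable def Pinf (φ : ℝ → ℝ) (lam x : ℝ) : ℝ :=
  2 * Ainf φ lam * φ x +
    ∑' k : ℕ, a (k + 1) * (φ (x + lam * (k + 1)) + φ (x - lam * (k + 1)))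

/-!
If `φ(t) = ∫ cos(tω) dμ(ω)` for a probability measure `μ`, then integrating the cosine series of `H`
term by term gives `P_∞(λ, x) = 2 Cov(cos(xω), H(λω))`. At `x = λ` the identity `H = 1 - (cos⁻)²`
turns this into `2 E[(cos⁻(λω))³] + 2 φ(λ) E[(cos⁻(λω))²]`, and the second term is nonnegative.
For the Gaussian `φ`, where `μ = N(0, 2)`, Markov's inequality bounds the first one from below by
a multiple of the mass of `[2π / (3λ), 4π / (3λ)]`, on which `cos⁻(λω) ≥ 1 / 2`.
-/

open MeasureTheory ProbabilityTheory

section CosineSeries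

/-- The `k`-th Fourier cosine coefficient `π⁻¹ ∫_{-π}^{π} f(x) cos (k x) dx` of a `2π`-periodic
function. With this normalization the constant term of the cosine series is `cosCoeff f 0 / 2`. -/
noncomputable def cosCoeff (f : ℝ → ℝ) (k : ℕ) : ℝ :=
  π⁻¹ * ∫ x in -π..π, f x * cos (k * x)

lemma integral_mul_sin_eq_zero_of_even {f : ℝ → ℝ} (heven : f.Even) (t r : ℝ) :
    ∫ x in -r..r, f x * sin (t * x) = 0 := by
  have hneg := intervalIntegral.integral_comp_neg (a := -r) (b := r) fun x => f x * sin (t * x)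
  simp only [heven _, mul_neg, sin_neg, intervalIntegral.integral_neg, neg_neg] at hneg
  linarith

lemma fourier_two_pi_apply (n : ℤ) (x : ℝ) :
    fourier n (x : AddCircle (2 * π)) = cos (n * x) + sin (n * x) * Complex.I := by
  have hpi : (π : ℂ) ≠ 0 := mod_cast pi_ne_zero
  rw [Complex.ofReal_cos, Complex.ofReal_sin, ← Complex.exp_mul_I, fourier_coe_apply]
  congr 1
  push_cast
  field_simp

local instance : Fact (0 < 2 * π) := ⟨two_pi_pos⟩

lemma fourierCoeff_eq_cosCoeff_natAbs {f : ℝ → ℝ} (hf : Continuous f) (heven : f.Even)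
    {F : AddCircle (2 * π) → ℂ} (hF : ∀ x : ℝ, F x = f x) (n : ℤ) :
    fourierCoeff F n = (cosCoeff f n.natAbs / 2 : ℝ) := by
  have hcos : ∀ x : ℝ, cos (n.natAbs * x) = cos (n * x) := fun x => by
    rcases Int.natAbs_eq n with h | h <;> rw [h] <;> simp
  have hintegrand : ∀ x : ℝ, fourier (-n) (x : AddCircle (2 * π)) • F x =
      ((f x * cos (n * x) : ℝ) : ℂ) - ((f x * sin (n * x) : ℝ) : ℂ) * Complex.I := fun x => by
    rw [fourier_two_pi_apply, hF, smul_eq_mul, Int.cast_neg, neg_mul, cos_neg, sin_neg]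
    push_cast
    ring
  rw [fourierCoeff_eq_intervalIntegral F n (-π), show -π + 2 * π = π by ring]
  simp only [hintegrand, cosCoeff, hcos]
  rw [intervalIntegral.integral_sub (Continuous.intervalIntegrable (by fun_prop) _ _)
      (Continuous.intervalIntegrable (by fun_prop) _ _), intervalIntegral.integral_mul_const,
    intervalIntegral.integral_ofReal, intervalIntegral.integral_ofReal,
    integral_mul_sin_eq_zero_of_even heven, Complex.real_smul]
  push_cast
  ring

theorem hasSum_cosCoeff_mul_cos {f : ℝ → ℝ} (hf : Continuous f) (heven : f.Even)
    (hper : f.Periodic (2 * π)) (hsum : Summable (cosCoeff f)) (y : ℝ) :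
    HasSum (fun k : ℕ => cosCoeff f k * cos (k * y)) (f y + cosCoeff f 0 / 2) := by
  let F : C(AddCircle (2 * π), ℂ) :=
    ⟨fun θ => (hper.lift θ : ℂ),
      Complex.continuous_ofReal.comp (continuous_coinduced_dom.mpr hf)⟩
  have hcoeff : ∀ n : ℤ, fourierCoeff F n = (cosCoeff f n.natAbs / 2 : ℝ) :=
    fourierCoeff_eq_cosCoeff_natAbs hf heven fun _ => rfl
  have hsumF : Summable (fourierCoeff F) := by
    simp only [funext hcoeff, Complex.summable_ofReal]
    exact .of_nat_of_neg (by simpa using hsum.div_const 2) (by simpa using hsum.div_const 2)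
  have hterm : ∀ n : ℤ, (fourierCoeff F n • fourier n (y : AddCircle (2 * π))).re =
      cosCoeff f n.natAbs / 2 * cos (n * y) := fun n => by
    rw [hcoeff, fourier_two_pi_apply, smul_eq_mul, Complex.re_ofReal_mul, Complex.add_re,
      Complex.ofReal_re, Complex.re_ofReal_mul, Complex.I_re, mul_zero, add_zero]
  have hre := (Complex.hasSum_re
    (has_pointwise_sum_fourier_series_of_summable hsumF (y : AddCircle (2 * π)))).nat_add_neg
  simp only [hterm] at hre
  convert hre using 1
  · ext k
    simp only [Int.natAbs_natCast, Int.natAbs_neg, Int.cast_neg, Int.cast_natCast, neg_mul, cos_neg]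
    ring
  · simp only [Int.natAbs_zero, Int.cast_zero, zero_mul, cos_zero, mul_one]
    rfl

end CosineSeries

section PositivePartOfCosine

lemma integral_cos_mul_eq_sinc (t r : ℝ) : ∫ x in -r..r, cos (t * x) = 2 * r * sinc (t * r) := by
  rcases eq_or_ne t 0 with rfl | ht
  · simp [two_mul]
  rcases eq_or_ne r 0 with rfl | hr
  · simp
  rw [intervalIntegral.integral_comp_mul_left _ ht, integral_cos, mul_neg, sin_neg,
    sinc_of_ne_zero (mul_ne_zero ht hr), smul_eq_mul]
  field_simp
  ring

lemma integral_cos_sq_mul_cos (t r : ℝ) :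
    ∫ x in -r..r, cos x ^ 2 * cos (t * x) =
      r * sinc (t * r) + r / 2 * (sinc ((t + 2) * r) + sinc ((t - 2) * r)) := by
  have hprod : ∀ x : ℝ, cos x ^ 2 * cos (t * x) =
      1 / 2 * cos (t * x) + 1 / 4 * (cos ((t + 2) * x) + cos ((t - 2) * x)) := fun x => by
    rw [add_mul, sub_mul, cos_add, cos_sub, cos_two_mul]
    ring
  have hint : ∀ s : ℝ, IntervalIntegrable (fun x => cos (s * x)) volume (-r) r := fun s =>
    Continuous.intervalIntegrable (by fun_prop) _ _
  simp only [hprod]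
  rw [intervalIntegral.integral_add ((hint _).const_mul _) (((hint _).add (hint _)).const_mul _),
    intervalIntegral.integral_const_mul, intervalIntegral.integral_const_mul,
    intervalIntegral.integral_add (hint _) (hint _), integral_cos_mul_eq_sinc,
    integral_cos_mul_eq_sinc, integral_cos_mul_eq_sinc]
  ring

lemma cosCoeff_posPart_cos_sq (k : ℕ) :
    cosCoeff (fun x => (cos x)⁺ ^ 2) k =
      sinc (k * (π / 2)) / 2 + (sinc ((k + 2) * (π / 2)) + sinc ((k - 2) * (π / 2))) / 4 := by
  have hpi := pi_pos
  have hcut : ∫ x in -π..π, (cos x)⁺ ^ 2 * cos (k * x) =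
      ∫ x in -(π / 2)..π / 2, (cos x)⁺ ^ 2 * cos (k * x) := by
    rw [intervalIntegral.integral_of_le (by linarith),
      intervalIntegral.integral_of_le (by linarith)]
    refine setIntegral_eq_of_subset_of_forall_sdiff_eq_zero measurableSet_Ioc
      (Set.Ioc_subset_Ioc (by linarith) (by linarith)) fun x ⟨hx, hx'⟩ => ?_
    have habs : π / 2 ≤ |x| := by
      rw [Set.mem_Ioc, not_and_or, not_lt, not_le] at hx'
      exact le_abs.2 (hx'.symm.imp le_of_lt le_neg_of_le_neg)
    have hcos : cos x ≤ 0 := by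
      rw [← cos_abs]
      exact cos_nonpos_of_pi_div_two_le_of_le habs (by linarith [abs_le.2 ⟨hx.1.le, hx.2⟩])
    simp [posPart_eq_zero.2 hcos]
  have hpos : ∀ x ∈ Set.uIcc (-(π / 2)) (π / 2),
      (cos x)⁺ ^ 2 * cos (k * x) = cos x ^ 2 * cos (k * x) := fun x hx => by
    rw [Set.uIcc_of_le (by linarith)] at hx
    rw [posPart_of_nonneg (cos_nonneg_of_mem_Icc hx)]
  rw [cosCoeff, hcut, intervalIntegral.integral_congr hpos, integral_cos_sq_mul_cos]
  field_simp
  ring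

end PositivePartOfCosine

section AuxiliaryFunction

/-- The auxiliary function `H`, which on `[-π, π]` is `1` for `|x| ≤ π / 2` and `sin² x` otherwise.
The sign of `cos x` encodes this case distinction `2π`-periodically. -/
noncomputable def H (x : ℝ) : ℝ :=
  if 0 ≤ cos x then 1 else sin x ^ 2

lemma H_eq_sin_sq_add_posPart_cos_sq (x : ℝ) : H x = sin x ^ 2 + (cos x)⁺ ^ 2 := by
  unfold H
  split_ifs with h
  · rw [posPart_of_nonneg h, sin_sq_add_cos_sq]
  · simp [posPart_eq_zero.2 (not_le.1 h).le]

lemma H_eq_one_sub_negPart_cos_sq (x : ℝ) : H x = 1 - (cos x)⁻ ^ 2 := by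
  unfold H
  split_ifs with h
  · simp [negPart_eq_zero.2 h]
  · rw [negPart_of_nonpos (not_le.1 h).le, neg_sq, sin_sq]

@[fun_prop]
lemma continuous_H : Continuous H := by
  have := continuous_posPart (α := ℝ)
  simp only [funext H_eq_sin_sq_add_posPart_cos_sq]
  fun_prop

lemma abs_H_le_one (x : ℝ) : |H x| ≤ 1 := by
  unfold H
  split_ifs
  · rw [abs_one]
  · rw [abs_sq]
    exact sin_sq_le_one x

lemma a_of_ne {k : ℕ} (h0 : k ≠ 0) (h2 : k ≠ 2) :
    a k = -4 * sin (k * π / 2) / (π * k * (k ^ 2 - 4)) := by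
  match k with
  | 0 => contradiction
  | 1 =>
    rw [a, Nat.cast_one, one_mul, sin_pi_div_two]
    ring
  | 2 => contradiction
  | _ + 3 => rw [a] <;> omega

lemma cosCoeff_posPart_cos_sq_of_ne {k : ℕ} (h0 : k ≠ 0) (h2 : k ≠ 2) :
    cosCoeff (fun x => (cos x)⁺ ^ 2) k = a k := by
  have hpi := pi_ne_zero
  have hk0 : (k : ℝ) ≠ 0 := mod_cast h0
  have hk2 : (k - 2 : ℝ) ≠ 0 := sub_ne_zero.2 (mod_cast h2)
  have hk2' : (k + 2 : ℝ) ≠ 0 := by positivity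
  have hk4 : (k ^ 2 - 4 : ℝ) = (k - 2) * (k + 2) := by ring
  have hadd : sin ((k + 2) * (π / 2)) = -sin (k * π / 2) := by
    rw [← sin_add_pi]
    ring_nf
  have hsub : sin ((k - 2) * (π / 2)) = -sin (k * π / 2) := by
    rw [← sin_sub_pi]
    ring_nf
  rw [cosCoeff_posPart_cos_sq, a_of_ne h0 h2, hk4, sinc_of_ne_zero (by positivity),
    sinc_of_ne_zero (by positivity), sinc_of_ne_zero (by positivity), hadd, hsub, ← mul_div_assoc]
  field_simp
  ring

lemma cosCoeff_posPart_cos_sq_zero : cosCoeff (fun x => (cos x)⁺ ^ 2) 0 = 1 / 2 := by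
  norm_num [cosCoeff_posPart_cos_sq, mul_div_cancel₀, sinc_of_ne_zero pi_ne_zero]

lemma cosCoeff_posPart_cos_sq_two : cosCoeff (fun x => (cos x)⁺ ^ 2) 2 = 1 / 4 := by
  rw [cosCoeff_posPart_cos_sq, Nat.cast_two, show (2 : ℝ) * (π / 2) = π by ring,
    show ((2 : ℝ) + 2) * (π / 2) = 2 * π by ring]
  norm_num [sinc_of_ne_zero pi_ne_zero, sinc_of_ne_zero two_pi_pos.ne']

-- The two corrections are the cosine coefficients of `sin² y = 1 / 2 - cos (2 y) / 2`, less the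
-- half of `cosCoeff _ 0` by which that coefficient exceeds the constant term of the series.
lemma a_eq_cosCoeff_add_single (k : ℕ) :
    a k = cosCoeff (fun x => (cos x)⁺ ^ 2) k +
      ((Pi.single 0 (1 / 4) : ℕ → ℝ) k + (Pi.single 2 (-1 / 2) : ℕ → ℝ) k) := by
  rcases eq_or_ne k 0 with rfl | h0
  · norm_num [a, cosCoeff_posPart_cos_sq_zero]
  rcases eq_or_ne k 2 with rfl | h2
  · norm_num [a, cosCoeff_posPart_cos_sq_two]
  · simp [cosCoeff_posPart_cos_sq_of_ne h0 h2, h0, h2]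

lemma abs_a_add_three_le (k : ℕ) : |a (k + 3)| ≤ 4 * (1 / ((k + 1 : ℕ) : ℝ) ^ 2) := by
  have hpi := pi_gt_three
  have hden : ((k + 1 : ℕ) : ℝ) ^ 2 ≤ π * (k + 3 : ℕ) * ((k + 3 : ℕ) ^ 2 - 4) := by
    have hone : (1 : ℝ) ≤ π * (k + 3) := by nlinarith
    push_cast
    nlinarith [sq_nonneg (k : ℝ)]
  rw [a_of_ne (by omega) (by omega), abs_div, abs_mul, abs_neg, abs_of_pos four_pos,
    mul_one_div]
  gcongr
  · exact mul_le_of_le_one_right zero_le_four (abs_sin_le_one _)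
  · exact hden.trans (le_abs_self _)

lemma summable_abs_a : Summable fun k => |a k| :=
  (summable_nat_add_iff 3).1 <| .of_nonneg_of_le (fun _ => abs_nonneg _) abs_a_add_three_le <|
    ((summable_nat_add_iff 1).2 (summable_one_div_nat_pow.2 one_lt_two)).mul_left 4

lemma summable_cosCoeff_posPart_cos_sq : Summable (cosCoeff fun x => (cos x)⁺ ^ 2) :=
  (summable_abs_a.of_abs.sub
    ((hasSum_pi_single 0 (1 / 4)).summable.add (hasSum_pi_single 2 (-1 / 2)).summable)).congr
    fun k => by rw [a_eq_cosCoeff_add_single, add_sub_cancel_right]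

theorem hasSum_a_mul_cos (y : ℝ) : HasSum (fun k : ℕ => a k * cos (k * y)) (H y) := by
  have hsingle : ∀ (j : ℕ) (c : ℝ), HasSum (fun k : ℕ => (Pi.single j c : ℕ → ℝ) k * cos (k * y))
      (c * cos (j * y)) := fun j c => by
    simpa using hasSum_single (f := fun k : ℕ => (Pi.single j c : ℕ → ℝ) k * cos (k * y)) j
      fun k hk => by simp [hk]
  have hposPart : HasSum (fun k : ℕ => cosCoeff (fun x => (cos x)⁺ ^ 2) k * cos (k * y))
      ((cos y)⁺ ^ 2 + 1 / 4) := by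
    have h := hasSum_cosCoeff_mul_cos (f := fun x => (cos x)⁺ ^ 2)
      ((continuous_posPart.comp continuous_cos).pow 2) (fun x => by simp) (fun x => by simp)
      summable_cosCoeff_posPart_cos_sq y
    rw [cosCoeff_posPart_cos_sq_zero] at h
    norm_num at h ⊢
    exact h
  convert hposPart.add ((hsingle 0 (1 / 4)).add (hsingle 2 (-1 / 2))) using 1
  · ext k
    rw [a_eq_cosCoeff_add_single]
    ring
  · rw [H_eq_sin_sq_add_posPart_cos_sq, sin_sq_eq_half_sub]
    push_cast
    rw [zero_mul, cos_zero]
    ring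

end AuxiliaryFunction

section Covariance

lemma hasSum_integral_mul_of_abs_le_one {Ω : Type*} [MeasurableSpace Ω] {μ : Measure Ω}
    {c : ℕ → ℝ} (hc : Summable fun k => |c k|) {g : ℕ → Ω → ℝ}
    (hg : ∀ k, AEStronglyMeasurable (g k) μ) (hg1 : ∀ k ω, |g k ω| ≤ 1)
    {w : Ω → ℝ} (hw : Integrable w μ) {f : Ω → ℝ} (hf : ∀ ω, HasSum (fun k => c k * g k ω) (f ω)) :
    HasSum (fun k => c k * ∫ ω, w ω * g k ω ∂μ) (∫ ω, w ω * f ω ∂μ) := by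
  have hint : ∀ k, Integrable (fun ω => w ω * g k ω) μ := fun k =>
    hw.mul_bdd (hg k) (.of_forall (hg1 k))
  have hbound : ∀ k, ∫ ω, ‖c k * (w ω * g k ω)‖ ∂μ ≤ |c k| * ∫ ω, |w ω| ∂μ := fun k => by
    rw [← integral_const_mul]
    refine integral_mono ((hint k).const_mul _).norm (hw.abs.const_mul _) fun ω => ?_
    simp only [norm_eq_abs, abs_mul]
    gcongr
    exact mul_le_of_le_one_right (abs_nonneg _) (hg1 k ω)
  have hsum := hasSum_integral_of_summable_integral_norm (fun k => (hint k).const_mul (c k)) <|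
    .of_nonneg_of_le (fun k => integral_nonneg fun ω => norm_nonneg _) hbound (hc.mul_right _)
  have htsum : ∀ ω, ∑' k, c k * (w ω * g k ω) = w ω * f ω := fun ω => by
    simp only [mul_left_comm (c _), ((hf ω).mul_left (w ω)).tsum_eq]
  simpa only [integral_const_mul, htsum] using hsum

lemma abs_covariance_le {Ω : Type*} [MeasurableSpace Ω] {μ : Measure Ω} [IsProbabilityMeasure μ]
    {X Y : Ω → ℝ} {c d : ℝ} (hX : ∀ ω, |X ω| ≤ c) (hY : ∀ ω, |Y ω| ≤ d) :
    |cov[X, Y; μ]| ≤ 2 * c * (2 * d) := by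
  have hcentered : ∀ {Z : Ω → ℝ} {b : ℝ}, (∀ ω, |Z ω| ≤ b) → ∀ ω, |Z ω - μ[Z]| ≤ 2 * b :=
    fun {Z b} hZ ω => by
      have hmean : |μ[Z]| ≤ b := by
        simpa using norm_integral_le_of_norm_le_const (μ := μ) (f := Z) (.of_forall hZ)
      linarith [abs_sub (Z ω) μ[Z], hZ ω]
  have hprod : ∀ ω, ‖(X ω - μ[X]) * (Y ω - μ[Y])‖ ≤ 2 * c * (2 * d) := fun ω => by
    rw [norm_mul]
    exact mul_le_mul (hcentered hX ω) (hcentered hY ω) (abs_nonneg _)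
      ((abs_nonneg _).trans (hcentered hX ω))
  simpa [covariance] using norm_integral_le_of_norm_le_const (μ := μ) (.of_forall hprod)

variable {μ : Measure ℝ}

lemma memLp_cos_mul [IsFiniteMeasure μ] (t : ℝ) (p : ENNReal) :
    MemLp (fun ω => cos (t * ω)) p μ :=
  .of_bound (by fun_prop) 1 (.of_forall fun ω => abs_cos_le_one (t * ω))

lemma memLp_H_mul [IsFiniteMeasure μ] (lam : ℝ) (p : ENNReal) :
    MemLp (fun ω => H (lam * ω)) p μ :=
  .of_bound (by fun_prop) 1 (.of_forall fun ω => abs_H_le_one (lam * ω))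

lemma memLp_negPart_cos_mul_pow [IsFiniteMeasure μ] (lam : ℝ) (n : ℕ) (p : ENNReal) :
    MemLp (fun ω => (cos (lam * ω))⁻ ^ n) p μ := by
  refine .of_bound (by fun_prop) 1 (.of_forall fun ω => ?_)
  rw [norm_eq_abs, abs_of_nonneg (by positivity)]
  exact pow_le_one₀ (negPart_nonneg _) (sup_le (neg_le.1 (neg_one_le_cos _)) zero_le_one)

lemma integrable_cos_mul [IsFiniteMeasure μ] (t : ℝ) : Integrable (fun ω => cos (t * ω)) μ :=
  (memLp_cos_mul t 1).integrable le_rfl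

lemma integral_cos_add_integral_cos [IsFiniteMeasure μ] (s t : ℝ) :
    ∫ ω, cos ((s + t) * ω) ∂μ + ∫ ω, cos ((s - t) * ω) ∂μ =
      2 * ∫ ω, cos (s * ω) * cos (t * ω) ∂μ := by
  rw [← integral_add (integrable_cos_mul _) (integrable_cos_mul _), ← integral_const_mul]
  congr with ω
  rw [add_mul, sub_mul, cos_add, cos_sub]
  ring

lemma hasSum_a_mul_integral_cos (lam : ℝ) {w : ℝ → ℝ} (hw : Integrable w μ) :
    HasSum (fun k : ℕ => a (k + 1) * ∫ ω, w ω * cos (lam * (k + 1) * ω) ∂μ)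
      (∫ ω, w ω * H (lam * ω) ∂μ - 3 / 4 * ∫ ω, w ω ∂μ) := by
  have h := hasSum_integral_mul_of_abs_le_one summable_abs_a
    (g := fun k ω => cos (k * (lam * ω))) (μ := μ) (fun k => by fun_prop)
    (fun k ω => abs_cos_le_one _) hw fun ω => hasSum_a_mul_cos (lam * ω)
  rw [← hasSum_nat_add_iff' 1] at h
  have hterm : ∀ (k : ℕ) (ω : ℝ), cos ((k + 1 : ℕ) * (lam * ω)) = cos (lam * (k + 1) * ω) :=
    fun k ω => by rw [Nat.cast_succ, ← mul_assoc, mul_comm lam]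
  simp only [hterm, Finset.sum_range_one, Nat.cast_zero, zero_mul, cos_zero, mul_one] at h
  exact h

variable [IsProbabilityMeasure μ]

theorem Pinf_integral_cos_eq_two_mul_covariance (lam x : ℝ) :
    Pinf (fun t => ∫ ω, cos (t * ω) ∂μ) lam x =
      2 * cov[fun ω => cos (x * ω), fun ω => H (lam * ω); μ] := by
  have hA := (hasSum_a_mul_integral_cos (μ := μ) lam (integrable_const 1)).tsum_eq
  have hP := (hasSum_a_mul_integral_cos lam (integrable_cos_mul (μ := μ) x)).tsum_eq
  have hcov := covariance_eq_sub (memLp_cos_mul (μ := μ) x 2) (memLp_H_mul lam 2)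
  simp only [one_mul, integral_const, probReal_univ, smul_eq_mul, mul_one] at hA
  simp only [Pinf, Ainf, integral_cos_add_integral_cos, mul_left_comm _ (2 : ℝ), tsum_mul_left,
    hA, hP, hcov, Pi.mul_apply]
  ring

lemma bddAbove_abs_Pinf_integral_cos (lam : ℝ) :
    BddAbove (Set.range fun x => |Pinf (fun t => ∫ ω, cos (t * ω) ∂μ) lam x|) := by
  refine ⟨2 * (2 * 1 * (2 * 1)), ?_⟩
  rintro _ ⟨x, rfl⟩
  dsimp only
  rw [Pinf_integral_cos_eq_two_mul_covariance, abs_mul, abs_two]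
  gcongr
  exact abs_covariance_le (fun ω => abs_cos_le_one (x * ω)) (fun ω => abs_H_le_one (lam * ω))

theorem two_mul_integral_negPart_cos_cube_le_Pinf {lam : ℝ} (hlam : 0 ≤ ∫ ω, cos (lam * ω) ∂μ) :
    2 * ∫ ω, (cos (lam * ω))⁻ ^ 3 ∂μ ≤ Pinf (fun t => ∫ ω, cos (t * ω) ∂μ) lam lam := by
  have hcube : ∀ ω, cos (lam * ω) * (cos (lam * ω))⁻ ^ 2 = -(cos (lam * ω))⁻ ^ 3 := fun ω => by
    rcases le_total 0 (cos (lam * ω)) with h | h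
    · simp [negPart_eq_zero.2 h]
    · rw [negPart_of_nonpos h]
      ring
  have hcov : cov[fun ω => cos (lam * ω), fun ω => H (lam * ω); μ] =
      ∫ ω, (cos (lam * ω))⁻ ^ 3 ∂μ + (∫ ω, cos (lam * ω) ∂μ) * ∫ ω, (cos (lam * ω))⁻ ^ 2 ∂μ := by
    simp only [H_eq_one_sub_negPart_cos_sq]
    rw [covariance_const_sub_right ((memLp_negPart_cos_mul_pow lam 2 1).integrable le_rfl),
      covariance_eq_sub (memLp_cos_mul lam 2) (memLp_negPart_cos_mul_pow lam 2 2)]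
    simp only [Pi.mul_apply, hcube, integral_neg]
    ring
  rw [Pinf_integral_cos_eq_two_mul_covariance, hcov, mul_add]
  exact le_add_of_nonneg_right <| mul_nonneg two_pos.le <| mul_nonneg hlam <|
    integral_nonneg fun ω => by positivity

end Covariance

section GaussianMeasure

lemma integral_cos_mul_gaussianReal (m : ℝ) (v : NNReal) (t : ℝ) :
    ∫ ω, cos (t * ω) ∂gaussianReal m v = exp (-(v * t ^ 2 / 2)) * cos (t * m) := by
  have hint : Integrable (fun ω : ℝ => Complex.exp (t * ω * Complex.I)) (gaussianReal m v) :=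
    .of_bound (by fun_prop) 1 <| .of_forall fun ω => by
      rw [← Complex.ofReal_mul, Complex.norm_exp_ofReal_mul_I]
  have hre := congrArg Complex.re (charFun_gaussianReal (μ := m) (v := v) t)
  rw [charFun_apply_real, ← RCLike.re_to_complex, ← integral_re hint] at hre
  simpa [Complex.exp_re, ← Complex.ofReal_pow] using hre

lemma integral_cos_mul_gaussianReal_zero_two (t : ℝ) :
    ∫ ω, cos (t * ω) ∂gaussianReal 0 2 = exp (-t ^ 2) := by
  simp [integral_cos_mul_gaussianReal]

lemma antitoneOn_gaussianPDFReal (m : ℝ) (v : NNReal) :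
    AntitoneOn (gaussianPDFReal m v) (Set.Ici m) := by
  intro x hx y _ hxy
  have : 0 ≤ x - m := sub_nonneg.2 hx
  unfold gaussianPDFReal
  gcongr

lemma sub_mul_gaussianPDFReal_le_measureReal_Icc {m : ℝ} {v : NNReal} (hv : v ≠ 0) {x y : ℝ}
    (hx : m ≤ x) (hxy : x ≤ y) :
    (y - x) * gaussianPDFReal m v y ≤ (gaussianReal m v).real (Set.Icc x y) := by
  have hmin : ∀ z ∈ Set.Icc x y, gaussianPDFReal m v y ≤ gaussianPDFReal m v z := fun z hz =>
    antitoneOn_gaussianPDFReal m v (hx.trans hz.1) (hx.trans hxy) hz.2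
  rw [measureReal_def, gaussianReal_apply_eq_integral m hv,
    ENNReal.toReal_ofReal (integral_nonneg (gaussianPDFReal_nonneg m v)), mul_comm,
    ← volume_real_Icc_of_le hxy]
  exact setIntegral_ge_of_const_le_real measurableSet_Icc measure_Icc_lt_top.ne hmin
    (integrable_gaussianPDFReal m v).integrableOn

end GaussianMeasure

section LowerBound

lemma cos_le_neg_half {x : ℝ} (hx : x ∈ Set.Icc (2 * π / 3) (4 * π / 3)) : cos x ≤ -(1 / 2) := by
  have hcos : cos (π / 3) ≤ cos (x - π) := by
    rw [← cos_abs (x - π)]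
    have hpi := pi_pos
    exact cos_le_cos_of_nonneg_of_le_pi (abs_nonneg _) (by linarith)
      (abs_le.2 ⟨by linarith [hx.1], by linarith [hx.2]⟩)
  rw [cos_sub_pi, cos_pi_div_three] at hcos
  linarith

lemma measureReal_Icc_le_integral_negPart_cos_cube {μ : Measure ℝ} [IsFiniteMeasure μ] {lam : ℝ}
    (hlam : 0 < lam) :
    1 / 8 * μ.real (Set.Icc (2 * π / (3 * lam)) (4 * π / (3 * lam))) ≤
      ∫ ω, (cos (lam * ω))⁻ ^ 3 ∂μ := by
  have hsubset : Set.Icc (2 * π / (3 * lam)) (4 * π / (3 * lam)) ⊆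
      {ω | 1 / 8 ≤ (cos (lam * ω))⁻ ^ 3} := fun ω hω => by
    have hmem : lam * ω ∈ Set.Icc (2 * π / 3) (4 * π / 3) := by
      rw [← div_div, ← div_div] at hω
      exact ⟨(div_le_iff₀' hlam).1 hω.1, (le_div_iff₀' hlam).1 hω.2⟩
    have hhalf : 1 / 2 ≤ (cos (lam * ω))⁻ :=
      (le_neg.2 (cos_le_neg_half hmem)).trans (neg_le_negPart _)
    calc (1 / 8 : ℝ) = (1 / 2) ^ 3 := by norm_num
      _ ≤ (cos (lam * ω))⁻ ^ 3 := by gcongr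
  calc 1 / 8 * μ.real (Set.Icc (2 * π / (3 * lam)) (4 * π / (3 * lam)))
      ≤ 1 / 8 * μ.real {ω | 1 / 8 ≤ (cos (lam * ω))⁻ ^ 3} :=
        mul_le_mul_of_nonneg_left (measureReal_mono hsubset) (by norm_num)
    _ ≤ ∫ ω, (cos (lam * ω))⁻ ^ 3 ∂μ :=
        mul_meas_ge_le_integral_of_nonneg (.of_forall fun ω => by positivity)
          ((memLp_negPart_cos_mul_pow lam 3 1).integrable le_rfl) _

-- The density at the right endpoint is `exp (-4π² / (9λ²)) / (2√π)`; the slack in the constants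
-- is `√π ≤ 16 / 9` and `4 / 9 ≤ 1 / 2`.
lemma le_measureReal_Icc_gaussianReal {lam : ℝ} (hlam : 0 < lam) :
    3 * π / (16 * lam) * exp (-π ^ 2 / (2 * lam ^ 2)) ≤
      (gaussianReal 0 2).real (Set.Icc (2 * π / (3 * lam)) (4 * π / (3 * lam))) := by
  have hsqrt : √(2 * π * (2 : NNReal)) ≤ 32 / 9 :=
    sqrt_le_iff.2 ⟨by norm_num, by push_cast; linarith [pi_lt_d2]⟩
  have hexp : -π ^ 2 / (2 * lam ^ 2) ≤ -(4 * π / (3 * lam) - 0) ^ 2 / (2 * (2 : NNReal)) := by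
    push_cast
    rw [sub_zero, div_pow, mul_pow, mul_pow, ← neg_div, div_div,
      div_le_div_iff₀ (by positivity) (by positivity)]
    nlinarith [show 0 < π ^ 2 * lam ^ 2 by positivity]
  calc 3 * π / (16 * lam) * exp (-π ^ 2 / (2 * lam ^ 2))
      = (4 * π / (3 * lam) - 2 * π / (3 * lam)) *
          ((32 / 9)⁻¹ * exp (-π ^ 2 / (2 * lam ^ 2))) := by
        field_simp
        ring
    _ ≤ (4 * π / (3 * lam) - 2 * π / (3 * lam)) * gaussianPDFReal 0 2 (4 * π / (3 * lam)) := by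
        unfold gaussianPDFReal
        gcongr
        rw [sub_nonneg]
        gcongr
        norm_num
    _ ≤ (gaussianReal 0 2).real (Set.Icc (2 * π / (3 * lam)) (4 * π / (3 * lam))) :=
        sub_mul_gaussianPDFReal_le_measureReal_Icc two_ne_zero (by positivity) <| by
          gcongr
          norm_num

theorem Pinf_gaussian_sup_norm_lower_bound_general (lam : ℝ) (hlam : 0 < lam) :
    (⨆ x, |Pinf (fun t => exp (-t ^ 2)) lam x|) ≥
      3 * π / (64 * lam) * exp (-π ^ 2 / (2 * lam ^ 2)) := by
  have hpos : 0 ≤ ∫ ω, cos (lam * ω) ∂gaussianReal 0 2 := by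
    rw [integral_cos_mul_gaussianReal_zero_two]
    positivity
  simp only [← integral_cos_mul_gaussianReal_zero_two]
  calc 3 * π / (64 * lam) * exp (-π ^ 2 / (2 * lam ^ 2))
      = 2 * (1 / 8 * (3 * π / (16 * lam) * exp (-π ^ 2 / (2 * lam ^ 2)))) := by ring
    _ ≤ 2 * (1 / 8 * (gaussianReal 0 2).real
          (Set.Icc (2 * π / (3 * lam)) (4 * π / (3 * lam)))) := by
        gcongr
        exact le_measureReal_Icc_gaussianReal hlam
    _ ≤ 2 * ∫ ω, (cos (lam * ω))⁻ ^ 3 ∂gaussianReal 0 2 := by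
        gcongr
        exact measureReal_Icc_le_integral_negPart_cos_cube hlam
    _ ≤ Pinf (fun t => ∫ ω, cos (t * ω) ∂gaussianReal 0 2) lam lam :=
        two_mul_integral_negPart_cos_cube_le_Pinf hpos
    _ ≤ |Pinf (fun t => ∫ ω, cos (t * ω) ∂gaussianReal 0 2) lam lam| := le_abs_self _
    _ ≤ ⨆ x, |Pinf (fun t => ∫ ω, cos (t * ω) ∂gaussianReal 0 2) lam x| :=
        le_ciSup (bddAbove_abs_Pinf_integral_cos lam) lam

end LowerBound

theorem Pinf_gaussian_sup_norm_lower_bound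
    (lam : ℝ) (hlam : lam ∈ Set.Ioo (0 : ℝ) 1) :
    (⨆ x, |Pinf (fun t => Real.exp (-t ^ 2)) lam x|) ≥
      3 * Real.pi / (64 * lam) * Real.exp (-Real.pi ^ 2 / (2 * lam ^ 2)) :=
  Pinf_gaussian_sup_norm_lower_bound_general lam hlam.1
end
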